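/- The matching distance d_match between reduced size functions, defined by d_match(ℓ*₁, ℓ*₂) := inf_σ sup_i d(a_i, b_{σ(i)}), where (a_i) and (b_i) are representative sequences for ℓ*₁ and ℓ*₂ and σ ranges over all bijections ℕ → ℕ, is well-defined (independent of the choice of representative sequences), finite, and satisfies the axioms of a metric on reduced size functions. -/

import Mathlib

open Set Topology
open scoped ENNReal

noncomputable def rsf {M : Type*} [TopologicalSpace M] (φ : M → ℝ) (x y : ℝ) : ℕ :=
  Set.ncard {C : Set M | ∃ P, φ P ≤ x ∧ C = connectedComponentIn {Q | φ Q ≤ y} P}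

noncomputable def mult {M : Type*} [TopologicalSpace M] (φ : M → ℝ) (p : ℝ × ℝ) : ℤ :=
  sInf {z : ℤ | ∃ ε : ℝ, 0 < ε ∧ p.1 + ε < p.2 - ε ∧
    z = (rsf φ (p.1 + ε) (p.2 - ε) : ℤ) - (rsf φ (p.1 - ε) (p.2 - ε) : ℤ)
      - (rsf φ (p.1 + ε) (p.2 + ε) : ℤ) + (rsf φ (p.1 - ε) (p.2 + ε) : ℤ)}

noncomputable def multInf {M : Type*} [TopologicalSpace M] (φ : M → ℝ) (k : ℝ) : ℤ :=
  sInf {z : ℤ | ∃ ε : ℝ, 0 < ε ∧ k + ε < 1 / ε ∧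
    z = (rsf φ (k + ε) (1 / ε) : ℤ) - (rsf φ (k - ε) (1 / ε) : ℤ)}

open scoped Classical in
noncomputable def eDist (p q : ℝ × EReal) : ℝ≥0∞ :=
  if p.2 = ⊤ ∧ q.2 = ⊤ then ENNReal.ofReal |p.1 - q.1|
  else if p.2 = ⊤ ∨ q.2 = ⊤ then ⊤
  else ENNReal.ofReal (min (max |p.1 - q.1| |p.2.toReal - q.2.toReal|)
    (max ((p.2.toReal - p.1) / 2) ((q.2.toReal - q.1) / 2)))

def IsRepSeq {M : Type*} [TopologicalSpace M] (φ : M → ℝ) (a : ℕ → ℝ × EReal) : Prop :=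
  (∃ k : ℝ, a 0 = (k, ⊤) ∧ 0 < multInf φ k) ∧
  (∀ i : ℕ, 0 < i →
    (∃ x y : ℝ, a i = (x, (y : EReal)) ∧ x < y ∧ 0 < mult φ (x, y)) ∨
    (∃ x : ℝ, a i = (x, (x : EReal)))) ∧
  (∀ x y : ℝ, x < y → 0 < mult φ (x, y) →
    Set.ncard {i : ℕ | a i = (x, (y : EReal))} = (mult φ (x, y)).toNat) ∧
  {i : ℕ | ∃ x : ℝ, a i = (x, (x : EReal))}.Infinite

noncomputable def dMatchSeq (a b : ℕ → ℝ × EReal) : ℝ≥0∞ :=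
  ⨅ σ : {σ : ℕ → ℕ // Function.Bijective σ}, ⨆ i : ℕ, eDist (a i) (b (σ.1 i))

noncomputable def dMatch {M N : Type*} [TopologicalSpace M] [TopologicalSpace N]
    (φ : M → ℝ) (ψ : N → ℝ) : ℝ≥0∞ :=
  sInf {s : ℝ≥0∞ | ∃ a b, IsRepSeq φ a ∧ IsRepSeq ψ b ∧ s = dMatchSeq a b}


lemma cc_closed {M : Type*} [TopologicalSpace M] {F : Set M} (hF : IsClosed F) (p : M) :
    IsClosed (connectedComponentIn F p) := by
  by_cases h : p ∈ F
  · rw [connectedComponentIn_eq_image h]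
    exact hF.isClosedEmbedding_subtypeVal.isClosedMap _ isClosed_connectedComponent
  · rw [connectedComponentIn_eq_empty h]; exact isClosed_empty

section topo
variable {M : Type*} [TopologicalSpace M] {φ : M → ℝ}

/-- sublevel component -/
def slc (φ : M → ℝ) (y : ℝ) (p : M) : Set M := connectedComponentIn {Q | φ Q ≤ y} p

def slS (φ : M → ℝ) (x y : ℝ) : Set (Set M) :=
  {C : Set M | ∃ P, φ P ≤ x ∧ C = connectedComponentIn {Q | φ Q ≤ y} P}

lemma rsf_eq (φ : M → ℝ) (x y : ℝ) : rsf φ x y = (slS φ x y).ncard := rfl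

lemma slS_mono {x x' y : ℝ} (h : x ≤ x') : slS φ x y ⊆ slS φ x' y := by
  rintro C ⟨P, hP, rfl⟩
  exact ⟨P, hP.trans h, rfl⟩

lemma slc_closed (hφ : Continuous φ) (y : ℝ) (p : M) : IsClosed (slc φ y p) :=
  cc_closed (isClosed_le hφ continuous_const) p

lemma mem_slc {y : ℝ} {p : M} (h : φ p ≤ y) : p ∈ slc φ y p :=
  mem_connectedComponentIn (F := {Q | φ Q ≤ y}) h

lemma slc_mono {y z : ℝ} (h : y ≤ z) (p : M) : slc φ y p ⊆ slc φ z p :=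
  connectedComponentIn_mono p (fun _ hq => le_trans hq h)

lemma slS_finite [CompactSpace M] [LocallyConnectedSpace M] (hφ : Continuous φ) {x y : ℝ}
    (h : x < y) : (slS φ x y).Finite := by
  have hK : IsCompact {Q | φ Q ≤ x} := (isClosed_le hφ continuous_const).isCompact
  have hO : IsOpen {Q | φ Q < y} := isOpen_lt hφ continuous_const
  obtain ⟨t, -, ht⟩ := hK.elim_nhds_subcover (fun P => connectedComponentIn {Q | φ Q < y} P)
    (fun P hP => hO.connectedComponentIn.mem_nhds
      (mem_connectedComponentIn (F := {Q | φ Q < y}) (lt_of_le_of_lt hP h)))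
  refine (t.finite_toSet.image (fun P => connectedComponentIn {Q | φ Q ≤ y} P)).subset ?_
  rintro C ⟨P, hP, rfl⟩
  have := ht hP
  simp only [mem_iUnion] at this
  obtain ⟨i, hi, hPi⟩ := this
  refine ⟨i, hi, ?_⟩
  exact connectedComponentIn_eq (connectedComponentIn_mono i (fun q (hq : φ q < y) => hq.le) hPi)

lemma rsf_mono [CompactSpace M] [LocallyConnectedSpace M] (hφ : Continuous φ) {x x' y : ℝ}
    (h : x ≤ x') (h' : x' < y) : rsf φ x y ≤ rsf φ x' y :=
  Set.ncard_le_ncard (slS_mono h) (slS_finite hφ h')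

lemma rsf_box [Nonempty M] [CompactSpace M] [LocallyConnectedSpace M] (hφ : Continuous φ) {x x' y y' : ℝ}
    (h : x ≤ x') (h' : x' < y) (hy : y ≤ y') :
    rsf φ x' y' + rsf φ x y ≤ rsf φ x' y + rsf φ x y' := by
  have e1 : (slS φ x' y \ slS φ x y).ncard + rsf φ x y = rsf φ x' y :=
    Set.ncard_sdiff_add_ncard_of_subset (slS_mono h) (slS_finite hφ h')
  have e2 : (slS φ x' y' \ slS φ x y').ncard + rsf φ x y' = rsf φ x' y' :=
    Set.ncard_sdiff_add_ncard_of_subset (slS_mono h) (slS_finite hφ (h'.trans_le hy))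
  have key : (slS φ x' y' \ slS φ x y').ncard ≤ (slS φ x' y \ slS φ x y).ncard := by
    have hex : ∀ C ∈ slS φ x' y', ∃ P, φ P ≤ x' ∧ C = connectedComponentIn {Q | φ Q ≤ y'} P :=
      fun C hC => hC
    choose! r hr1 hr2 using hex
    refine Set.ncard_le_ncard_of_injOn (fun C => slc φ y (r C)) ?_ ?_
      ((slS_finite hφ h').sdiff)
    · rintro C ⟨hC, hC'⟩
      refine ⟨⟨r C, hr1 C hC, rfl⟩, ?_⟩
      rintro ⟨P, hP, hPe⟩
      apply hC'
      refine ⟨P, hP, ?_⟩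
      have : P ∈ slc φ y (r C) := by
        change slc φ y (r C) = slc φ y P at hPe
        rw [hPe]
        exact mem_slc (hP.trans (h.trans h'.le))
      rw [hr2 C hC]
      exact connectedComponentIn_eq (slc_mono hy _ this)
    · rintro C ⟨hC, -⟩ D ⟨hD, -⟩ hCD
      simp only at hCD
      have : r D ∈ slc φ y (r C) := by
        rw [hCD]; exact mem_slc ((hr1 D hD).trans h'.le)
      rw [hr2 C hC, hr2 D hD]
      exact connectedComponentIn_eq (slc_mono hy _ this)
  omega

lemma rsf_rcx [CompactSpace M] [LocallyConnectedSpace M] (hφ : Continuous φ) {x y : ℝ}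
    (h : x < y) : ∃ x' > x, x' < y ∧ rsf φ x' y = rsf φ x y := by
  obtain ⟨x1, h1, h1'⟩ := exists_between h
  have hfin := slS_finite hφ h1'
  have : ∀ᶠ z in 𝓝[>] x, ∀ C ∈ slS φ x1 y, C ∈ slS φ z y → C ∈ slS φ x y := by
    rw [Filter.eventually_all_finite hfin]
    intro C hC
    obtain ⟨P, hP, rfl⟩ := hC
    have hcl : IsClosed (slc φ y P) := slc_closed hφ y P
    obtain ⟨Q, hQ, hmin⟩ := hcl.isCompact.exists_isMinOn ⟨P, mem_slc (hP.trans h1'.le)⟩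
      hφ.continuousOn
    by_cases hQx : φ Q ≤ x
    · refine Filter.Eventually.of_forall fun z _ => ⟨Q, hQx, connectedComponentIn_eq hQ⟩
    · push Not at hQx
      filter_upwards [Ioo_mem_nhdsGT (lt_min hQx h)] with z hz
      rintro ⟨R, hR, hRe⟩
      exfalso
      have hRm : R ∈ slc φ y P := by
        change slc φ y P = slc φ y R at hRe
        rw [hRe]; exact mem_slc (hR.trans (hz.2.le.trans (min_le_right _ _)))
      have := hmin hRm
      simp only [mem_ofPred_eq] at this
      have h3 := hz.2.trans_le (min_le_left _ _)
      linarith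
  obtain ⟨z, hz, hz1, hz2⟩ := (this.and (Ioo_mem_nhdsGT h1)).exists
  refine ⟨z, hz1, hz2.trans h1', ?_⟩
  rw [rsf_eq, rsf_eq]
  congr 1
  refine Subset.antisymm (fun C hC => hz C (slS_mono hz2.le hC) hC) (slS_mono hz1.le)

lemma slc_separate [CompactSpace M] [T2Space M] (hφ : Continuous φ) {y : ℝ} {P Q : M}
    (hP : φ P ≤ y) (hQ : Q ∉ slc φ y P) : ∃ z > y, Q ∉ slc φ z P := by
  by_contra! hcon
  apply hQ
  set K : Set M := ⋂ z : Ioi y, slc φ z P with hK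
  have hKc : IsClosed K := isClosed_iInter fun z => slc_closed hφ _ _
  have hPK : P ∈ K := mem_iInter.2 fun z => mem_slc (hP.trans (le_of_lt z.2))
  have hQK : Q ∈ K := mem_iInter.2 fun z => hcon z z.2
  have hsub : K ⊆ {R | φ R ≤ y} := by
    intro R hR
    change φ R ≤ y
    refine le_of_forall_gt_imp_ge_of_dense fun z hz => ?_
    have hRz : R ∈ slc φ z P := mem_iInter.1 hR ⟨z, hz⟩
    exact connectedComponentIn_subset {Q | φ Q ≤ z} P hRz
  have hpre : IsPreconnected K := by
    rw [isPreconnected_iff_subset_of_fully_disjoint_closed hKc]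
    have aux : ∀ u v : Set M, IsClosed u → IsClosed v → K ⊆ u ∪ v → Disjoint u v → P ∈ u → K ⊆ u := by
      intro u v hu hv huv hd hPu
      obtain ⟨U, V, hU, hV, huU, hvV, hUV⟩ := SeparatedNhds.of_isCompact_isCompact hu.isCompact hv.isCompact hd
      have hdir : Directed (· ⊇ ·) (fun z : Ioi y => slc φ z P) := by
        intro a b
        rcases le_total a b with h | h
        · exact ⟨a, subset_rfl, slc_mono h P⟩
        · exact ⟨b, slc_mono h P, subset_rfl⟩
      have : Nonempty (Ioi y) := ⟨⟨y + 1, by simp⟩⟩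
      obtain ⟨z, hz⟩ := exists_subset_nhds_of_isCompact' (V := fun z : Ioi y => slc φ z P) hdir
        (fun z => (slc_closed hφ _ _).isCompact) (fun z => slc_closed hφ _ _)
        (U := U ∪ V) (fun R hR => (hU.union hV).mem_nhds (union_subset_union huU hvV (huv hR)))
      have hzU : slc φ z P ⊆ U :=
        isPreconnected_connectedComponentIn.subset_left_of_subset_union hU hV hUV hz
          ⟨P, mem_iInter.1 hPK z, huU hPu⟩
      intro R hR
      rcases huv hR with h | h
      · exact h
      · exact absurd (hvV h) (fun h' => hUV.le_bot ⟨hzU (mem_iInter.1 hR z), h'⟩)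
    intro u v hu hv huv hd
    rcases huv hPK with h | h
    · exact Or.inl (aux u v hu hv huv hd h)
    · exact Or.inr (aux v u hv hu (by rwa [union_comm]) hd.symm h)
  exact hpre.subset_connectedComponentIn hPK hsub hQK

lemma rsf_rcy [Nonempty M] [CompactSpace M] [T2Space M] [LocallyConnectedSpace M] (hφ : Continuous φ) {x y : ℝ}
    (h : x < y) : ∃ y' > y, rsf φ x y ≤ rsf φ x y' := by
  have hfin := slS_finite hφ h
  have hex : ∀ C ∈ slS φ x y, ∃ P, φ P ≤ x ∧ C = connectedComponentIn {Q | φ Q ≤ y} P :=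
      fun C hC => hC
  choose! r hr1 hr2 using hex
  have : ∀ᶠ z in 𝓝[>] y, ∀ C ∈ slS φ x y, ∀ D ∈ slS φ x y, slc φ z (r C) = slc φ z (r D) → C = D := by
    rw [Filter.eventually_all_finite hfin]
    intro C hC
    rw [Filter.eventually_all_finite hfin]
    intro D hD
    by_cases hCD : C = D
    · exact Filter.Eventually.of_forall fun _ _ => hCD
    have hn : r D ∉ slc φ y (r C) := by
      intro hm
      apply hCD
      rw [hr2 C hC, hr2 D hD]
      exact connectedComponentIn_eq hm
    obtain ⟨z, hz, hz'⟩ := slc_separate hφ ((hr1 C hC).trans h.le) hn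
    filter_upwards [Ioo_mem_nhdsGT hz] with w hw he
    exfalso
    apply hz'
    apply slc_mono hw.2.le
    rw [he]
    exact mem_slc ((hr1 D hD).trans (h.le.trans hw.1.le))
  obtain ⟨z, hz, hz1⟩ := (this.and self_mem_nhdsWithin).exists
  refine ⟨z, hz1, ?_⟩
  refine Set.ncard_le_ncard_of_injOn (fun C => slc φ z (r C)) (fun C hC => ⟨r C, hr1 C hC, rfl⟩)
    (fun C hC D hD hCD => hz C hC D hD hCD) (slS_finite hφ (h.trans hz1))

end topo

/-- Abstract properties of a reduced size function. -/
structure GoodF (f : ℝ → ℝ → ℕ) (m B : ℝ) : Prop where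
  mono : ∀ {x x' y : ℝ}, x ≤ x' → x' < y → f x y ≤ f x' y
  box : ∀ {x x' y y' : ℝ}, x ≤ x' → x' < y → y ≤ y' → f x' y' + f x y ≤ f x' y + f x y'
  rcx : ∀ {x y : ℝ}, x < y → ∃ x' > x, x' < y ∧ f x' y = f x y
  rcy : ∀ {x y : ℝ}, x < y → ∃ y' > y, f x y ≤ f x y'
  zero : ∀ {x y : ℝ}, x < m → f x y = 0
  one : ∀ {x y : ℝ}, m ≤ x → B ≤ y → f x y = 1

lemma rsf_good {M : Type*} [TopologicalSpace M] [CompactSpace M] [ConnectedSpace M]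
    [LocallyConnectedSpace M] [T2Space M] {φ : M → ℝ} (hφ : Continuous φ) :
    ∃ m B : ℝ, GoodF (rsf φ) m B := by
  obtain ⟨p, -, hp⟩ := isCompact_univ.exists_isMinOn (univ_nonempty (α := M)) hφ.continuousOn
  obtain ⟨q, -, hq⟩ := isCompact_univ.exists_isMaxOn (univ_nonempty (α := M)) hφ.continuousOn
  refine ⟨φ p, φ q, rsf_mono hφ, rsf_box hφ, rsf_rcx hφ, rsf_rcy hφ, ?_, ?_⟩
  · intro x y hx
    have : slS φ x y = ∅ := by
      ext C
      simp only [mem_empty_iff_false, iff_false]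
      rintro ⟨P, hP, -⟩
      have : φ p ≤ φ P := hp (mem_univ P)
      linarith
    rw [rsf_eq, this, ncard_empty]
  · intro x y hx hy
    have hu : {Q | φ Q ≤ y} = univ := by
      ext Q
      simp only [mem_ofPred_eq, mem_univ, iff_true]
      exact le_trans (hq (mem_univ Q)) hy
    have : slS φ x y = {univ} := by
      ext C
      simp only [slS, hu, mem_ofPred_eq, mem_singleton_iff, connectedComponentIn_univ,
        PreconnectedSpace.connectedComponent_eq_univ]
      exact ⟨fun ⟨P, _, h⟩ => h, fun h => ⟨p, hx, h⟩⟩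
    rw [rsf_eq, this, ncard_singleton]

lemma left_const_anti (g : ℝ → ℕ) {a x : ℝ} (hax : a < x)
    (hg : ∀ u v, a < u → u ≤ v → v < x → g v ≤ g u) :
    ∃ u0, a < u0 ∧ u0 < x ∧ ∀ u, u0 ≤ u → u < x → g u = g u0 := by
  have hne : (g '' Ioo a x).Nonempty := (nonempty_Ioo.2 hax).image g
  obtain ⟨n, ⟨u0, hu0, rfl⟩, hmin⟩ := (wellFounded_lt (α := ℕ)).has_min _ hne
  refine ⟨u0, hu0.1, hu0.2, fun u hu hux => le_antisymm (hg _ _ hu0.1 hu hux) ?_⟩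
  exact not_lt.1 (hmin _ ⟨u, ⟨hu0.1.trans_le hu, hux⟩, rfl⟩)

lemma GoodF.anti {f : ℝ → ℝ → ℕ} {m B : ℝ} (h : GoodF f m B) {x y y' : ℝ} (hx : x < y)
    (hy : y ≤ y') : f x y' ≤ f x y := by
  have hm : min x (m - 1) < m := by
    have := min_le_right x (m - 1)
    linarith
  have := h.box (min_le_left x (m - 1)) hx hy
  rw [h.zero hm, h.zero hm] at this
  omega

lemma GoodF.quadrant {f : ℝ → ℝ → ℕ} {m B : ℝ} (h : GoodF f m B) {x y : ℝ} (hxy : x < y) :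
    ∃ ε > 0, x + ε < y - ε ∧ ∀ u u' v v', x - ε < u → u < x + ε → x - ε < u' → u' < x + ε →
      y - ε < v → v < y + ε → y - ε < v' → v' < y + ε → (x ≤ u ↔ x ≤ u') → (y ≤ v ↔ y ≤ v') →
      f u v = f u' v' := by
  obtain ⟨d, hd, rfl⟩ : ∃ d > 0, y = x + 3 * d := ⟨(y - x) / 3, by linarith, by ring⟩
  set y := x + 3 * d with hy
  obtain ⟨u0, hu0a, hu0x, hu0⟩ := left_const_anti (fun u => f x (x + 2 * d) - f u (x + 2 * d))
    (a := x - 1) (x := x) (by linarith) (by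
      intro u v hu huv hv
      have := h.mono huv (show v < x + 2 * d by linarith)
      omega)
  obtain ⟨x1, hx1, hx1y, hx1e⟩ := h.rcx (show x < x + 2 * d by linarith)
  obtain ⟨v0, hv0a, hv0y, hv0⟩ := left_const_anti (fun v => f (x + d) v) (a := x + d) (x := y)
    (by linarith) (by
      intro u v hu huv hv
      exact h.anti hu huv)
  obtain ⟨y1, hy1, hy1e⟩ := h.rcy (show x + d < y by linarith)
  have hx1e' : ∀ u, x ≤ u → u ≤ x1 → f u (x + 2 * d) = f x (x + 2 * d) := by
    intro u h1 h2
    have a1 := h.mono h1 (show u < x + 2 * d by linarith)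
    have a2 := h.mono h2 (show x1 < x + 2 * d by linarith)
    omega
  have hy1e' : ∀ v, y ≤ v → v ≤ y1 → f (x + d) v = f (x + d) y := by
    intro v h1 h2
    have a1 := h.anti (show x + d < y by linarith) h1
    have a2 := h.anti (show x + d < v by linarith) h2
    omega
  have hu0' : ∀ u, u0 ≤ u → u < x → f u (x + 2 * d) = f u0 (x + 2 * d) := by
    intro u h1 h2
    have a1 := hu0 u h1 h2
    have a2 := h.mono h2.le (show x < x + 2 * d by linarith)
    have a3 := h.mono hu0x.le (show x < x + 2 * d by linarith)
    omega
  have X : ∀ u u' v, u ≤ u' → u' < x + 2 * d → x + 2 * d ≤ v →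
      f u (x + 2 * d) = f u' (x + 2 * d) → f u v = f u' v := by
    intro u u' v h1 h2 h3 h4
    have a1 := h.box h1 h2 h3
    have a2 := h.mono h1 (h2.trans_le h3)
    omega
  have X' : ∀ u u' v, u < x + 2 * d → u' < x + 2 * d → x + 2 * d ≤ v →
      f u (x + 2 * d) = f u' (x + 2 * d) → f u v = f u' v := by
    intro u u' v h1 h2 h3 h4
    rcases le_total u u' with h5 | h5
    · exact X u u' v h5 h2 h3 h4
    · exact (X u' u v h5 h1 h3 h4.symm).symm
  have Y : ∀ u v v', u ≤ x + d → x + d < v → v ≤ v' →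
      f (x + d) v = f (x + d) v' → f u v = f u v' := by
    intro u v v' h1 h2 h3 h4
    have a1 := h.box h1 h2 h3
    have a2 := h.anti (h1.trans_lt h2) h3
    omega
  have Y' : ∀ u v v', u ≤ x + d → x + d < v → x + d < v' →
      f (x + d) v = f (x + d) v' → f u v = f u v' := by
    intro u v v' h1 h2 h3 h4
    rcases le_total v v' with h5 | h5
    · exact Y u v v' h1 h2 h5 h4
    · exact (Y u v' v h1 h3 h5 h4.symm).symm
  obtain ⟨ε, hε, e1, e2, e3, e4, e5⟩ : ∃ ε > 0, ε ≤ x - u0 ∧ ε ≤ x1 - x ∧ ε ≤ d ∧ ε ≤ y - v0 ∧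
      ε ≤ y1 - y := by
    refine ⟨min (x - u0) (min (x1 - x) (min d (min (y - v0) (y1 - y)))), ?_, ?_, ?_, ?_, ?_, ?_⟩
    · simp only [gt_iff_lt, lt_min_iff]
      refine ⟨?_, ?_, ?_, ?_, ?_⟩ <;> linarith
    all_goals simp
  refine ⟨ε, hε, by linarith, ?_⟩
  intro u u' v v' hu1 hu2 hu1' hu2' hv1 hv2 hv1' hv2' hu hv
  have s1 : f u v = f u' v := by
    apply X' _ _ _ (by linarith) (by linarith) (by linarith)
    by_cases hux : x ≤ u
    · rw [hx1e' u hux (by linarith), hx1e' u' (hu.1 hux) (by linarith)]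
    · have hux' : ¬ x ≤ u' := fun h => hux (hu.2 h)
      rw [hu0' u (by linarith) (by linarith), hu0' u' (by linarith) (by linarith)]
  have s2 : f u' v = f u' v' := by
    apply Y' _ _ _ (by linarith) (by linarith) (by linarith)
    by_cases hvy : y ≤ v
    · rw [hy1e' v hvy (by linarith), hy1e' v' (hv.1 hvy) (by linarith)]
    · have hvy' : ¬ y ≤ v' := fun h => hvy (hv.2 h)
      exact (hv0 v (by linarith) (by linarith)).trans (hv0 v' (by linarith) (by linarith)).symm
  exact s1.trans s2

/-- second difference -/
def D2 (f : ℝ → ℝ → ℕ) (x y ε : ℝ) : ℤ :=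
  (f (x + ε) (y - ε) : ℤ) - (f (x - ε) (y - ε) : ℤ)
      - (f (x + ε) (y + ε) : ℤ) + (f (x - ε) (y + ε) : ℤ)

lemma GoodF.D2_mono {f : ℝ → ℝ → ℕ} {m B : ℝ} (h : GoodF f m B) {x y t η : ℝ} (ht : 0 ≤ t)
    (htη : t ≤ η) (hη : x + η < y - η) : D2 f x y t ≤ D2 f x y η := by
  have b1 := h.box (x := x - η) (x' := x - t) (y := y - η) (y' := y + η)
    (by linarith) (by linarith) (by linarith)
  have b2 := h.box (x := x + t) (x' := x + η) (y := y - η) (y' := y + η)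
    (by linarith) (by linarith) (by linarith)
  have b3 := h.box (x := x - t) (x' := x + t) (y := y - η) (y' := y - t)
    (by linarith) (by linarith) (by linarith)
  have b4 := h.box (x := x - t) (x' := x + t) (y := y + t) (y' := y + η)
    (by linarith) (by linarith) (by linarith)
  unfold D2
  omega

lemma GoodF.D2_nonneg {f : ℝ → ℝ → ℕ} {m B : ℝ} (h : GoodF f m B) {x y η : ℝ} (ht : 0 ≤ η)
    (hη : x + η < y - η) : 0 ≤ D2 f x y η := by
  have b1 := h.box (x := x - η) (x' := x + η) (y := y - η) (y' := y + η)
    (by linarith) (by linarith) (by linarith)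
  unfold D2
  omega

section mult
variable {M : Type*} [TopologicalSpace M] {φ : M → ℝ} {m B : ℝ}

lemma mult_def (φ : M → ℝ) (x y : ℝ) : mult φ (x, y) =
    sInf {z : ℤ | ∃ ε : ℝ, 0 < ε ∧ x + ε < y - ε ∧ z = D2 (rsf φ) x y ε} := rfl

lemma mult_bdd (h : GoodF (rsf φ) m B) (x y : ℝ) :
    BddBelow {z : ℤ | ∃ ε : ℝ, 0 < ε ∧ x + ε < y - ε ∧ z = D2 (rsf φ) x y ε} := by
  refine ⟨0, ?_⟩
  rintro z ⟨ε, h1, h2, rfl⟩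
  exact h.D2_nonneg h1.le h2

lemma mult_le (h : GoodF (rsf φ) m B) {x y ε : ℝ} (hε : 0 < ε) (hε' : x + ε < y - ε) :
    mult φ (x, y) ≤ D2 (rsf φ) x y ε := by
  rw [mult_def]
  exact csInf_le (mult_bdd h x y) ⟨ε, hε, hε', rfl⟩

lemma le_mult {x y : ℝ} (hxy : x < y) {n : ℤ}
    (H : ∀ ε : ℝ, 0 < ε → x + ε < y - ε → n ≤ D2 (rsf φ) x y ε) : n ≤ mult φ (x, y) := by
  rw [mult_def]
  apply le_csInf
  · exact ⟨_, (y - x) / 3, by linarith, by linarith, rfl⟩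
  · rintro z ⟨ε, h1, h2, rfl⟩
    exact H ε h1 h2

lemma mult_nonneg (h : GoodF (rsf φ) m B) {x y : ℝ} (hxy : x < y) : 0 ≤ mult φ (x, y) :=
  le_mult hxy fun _ h1 h2 => h.D2_nonneg h1.le h2

lemma mult_local (h : GoodF (rsf φ) m B) {x y : ℝ} (hxy : x < y) :
    ∃ ε > 0, x + ε < y - ε ∧ (∀ t, 0 < t → t < ε → mult φ (x, y) = D2 (rsf φ) x y t) ∧
      (∀ u u' v v', x - ε < u → u < x + ε → x - ε < u' → u' < x + ε →
      y - ε < v → v < y + ε → y - ε < v' → v' < y + ε → (x ≤ u ↔ x ≤ u') → (y ≤ v ↔ y ≤ v') →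
      rsf φ u v = rsf φ u' v') ∧
      (∀ u v, x - ε < u → u < x + ε → y - ε < v → v < y + ε → 0 < mult φ (u, v) →
        u = x ∧ v = y) := by
  obtain ⟨ε, hε, hε', H⟩ := h.quadrant hxy
  refine ⟨ε, hε, hε', ?_, H, ?_⟩
  · intro t ht htε
    refine le_antisymm (mult_le h ht (by linarith)) (le_mult hxy ?_)
    intro η h1 h2
    have hs : 0 < min η t := lt_min h1 ht
    have hs1 := min_le_left η t
    have hs2 := min_le_right η t
    refine le_trans (le_of_eq ?_) (h.D2_mono hs.le hs1 h2)
    generalize min η t = s at *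
    unfold D2
    rw [H (x + t) (x + s) (y - t) (y - s), H (x - t) (x - s) (y - t) (y - s),
      H (x + t) (x + s) (y + t) (y + s), H (x - t) (x - s) (y + t) (y + s)]
    all_goals first | linarith | (constructor <;> intro <;> linarith)
  · intro u v hu1 hu2 hv1 hv2 hpos
    by_contra hne
    have key : ∃ t > 0, u + t < v - t ∧ D2 (rsf φ) u v t = 0 := by
      by_cases hux : u = x
      · have hvy : v ≠ y := fun hvy => hne ⟨hux, hvy⟩
        obtain ⟨t, ht, t1, t2, t3, t4, t5⟩ : ∃ t > 0, t < |v - y| ∧ t < u - (x - ε) ∧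
            t < x + ε - u ∧ t < v - (y - ε) ∧ t < y + ε - v := by
          have : 0 < min |v - y| (min (u - (x - ε)) (min (x + ε - u) (min (v - (y - ε)) (y + ε - v)))) := by
            simp only [lt_min_iff, abs_pos]
            refine ⟨sub_ne_zero.2 hvy, ?_, ?_, ?_, ?_⟩ <;> linarith
          obtain ⟨t, ht, ht'⟩ := exists_between this
          simp only [lt_min_iff] at ht'
          exact ⟨t, ht, ht'.1, ht'.2.1, ht'.2.2.1, ht'.2.2.2.1, ht'.2.2.2.2⟩
        have hside : y ≤ v - t ↔ y ≤ v + t := by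
          rcases lt_abs.1 t1 with h5 | h5 <;> constructor <;> intro <;> linarith
        refine ⟨t, ht, by linarith, ?_⟩
        unfold D2
        rw [H (u + t) (u + t) (v - t) (v + t), H (u - t) (u - t) (v - t) (v + t)]
        · ring
        all_goals first | linarith | exact Iff.rfl | exact hside
      · obtain ⟨t, ht, t1, t2, t3, t4, t5⟩ : ∃ t > 0, t < |u - x| ∧ t < u - (x - ε) ∧
            t < x + ε - u ∧ t < v - (y - ε) ∧ t < y + ε - v := by
          have : 0 < min |u - x| (min (u - (x - ε)) (min (x + ε - u) (min (v - (y - ε)) (y + ε - v)))) := by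
            simp only [lt_min_iff, abs_pos]
            refine ⟨sub_ne_zero.2 hux, ?_, ?_, ?_, ?_⟩ <;> linarith
          obtain ⟨t, ht, ht'⟩ := exists_between this
          simp only [lt_min_iff] at ht'
          exact ⟨t, ht, ht'.1, ht'.2.1, ht'.2.2.1, ht'.2.2.2.1, ht'.2.2.2.2⟩
        have hside : x ≤ u + t ↔ x ≤ u - t := by
          rcases lt_abs.1 t1 with h5 | h5 <;> constructor <;> intro <;> linarith
        refine ⟨t, ht, by linarith, ?_⟩
        unfold D2
        rw [H (u + t) (u - t) (v - t) (v - t), H (u + t) (u - t) (v + t) (v + t)]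
        · ring
        all_goals first | linarith | exact Iff.rfl | exact hside
    obtain ⟨t, ht, ht', h0⟩ := key
    have := mult_le h ht ht'
    omega

lemma mult_bound (h : GoodF (rsf φ) m B) {x y : ℝ} (hxy : x < y) (hpos : 0 < mult φ (x, y)) :
    m ≤ x ∧ y ≤ B := by
  constructor
  · by_contra! hx
    obtain ⟨t, ht, ht'⟩ := exists_between (show 0 < min (m - x) ((y - x) / 2) from
      lt_min (by linarith) (by linarith))
    rw [lt_min_iff] at ht'
    have := mult_le h ht (show x + t < y - t by linarith)
    unfold D2 at this
    rw [h.zero (show x + t < m by linarith), h.zero (show x + t < m by linarith),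
      h.zero (show x - t < m by linarith), h.zero (show x - t < m by linarith)] at this
    simp at this
    omega
  · by_contra! hy
    obtain ⟨t, ht, ht'⟩ := exists_between (show 0 < min (y - B) ((y - x) / 2) from
      lt_min (by linarith) (by linarith))
    rw [lt_min_iff] at ht'
    have := mult_le h ht (show x + t < y - t by linarith)
    have hc : ∀ u, rsf φ u (y - t) = rsf φ u (y + t) := by
      intro u
      by_cases hu : m ≤ u
      · rw [h.one hu (by linarith), h.one hu (by linarith)]
      · push Not at hu
        rw [h.zero hu, h.zero hu]
    unfold D2 at this
    rw [hc, hc] at this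
    omega

lemma multInf_pos_iff (h : GoodF (rsf φ) m B) (k : ℝ) : 0 < multInf φ k ↔ k = m := by
  have hsmall : ∀ δ > 0, ∃ ε > 0, ε ≤ δ ∧ k + ε < 1 / ε ∧ B ≤ 1 / ε := by
    intro δ hδ
    have hA : 0 < |B| + |k| + 2 := by positivity
    refine ⟨min δ (1 / (|B| + |k| + 2)), lt_min hδ (by positivity), min_le_left _ _, ?_⟩
    have h1 : min δ (1 / (|B| + |k| + 2)) ≤ 1 / (|B| + |k| + 2) := min_le_right _ _
    have h0 : 0 < min δ (1 / (|B| + |k| + 2)) := lt_min hδ (by positivity)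
    generalize min δ (1 / (|B| + |k| + 2)) = ε at *
    have h2 : |B| + |k| + 2 ≤ 1 / ε := by
      rw [le_div_iff₀ h0]
      rw [le_div_iff₀ hA] at h1
      linarith
    have h3 : ε ≤ 1 := by
      refine h1.trans ?_
      rw [div_le_one hA]
      have := abs_nonneg B
      have := abs_nonneg k
      linarith
    have := abs_nonneg B
    have := abs_nonneg k
    have := le_abs_self B
    have := le_abs_self k
    constructor <;> linarith
  constructor
  · intro hpos
    by_contra hk
    obtain ⟨ε, hε, h1, h2, h3⟩ := hsmall (|k - m| / 2) (by
      have := abs_pos.2 (sub_ne_zero.2 hk)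
      linarith)
    have hle : multInf φ k ≤ 0 := by
      refine csInf_le ⟨0, ?_⟩ ⟨ε, hε, h2, ?_⟩
      · rintro z ⟨η, e1, e2, rfl⟩
        have := h.mono (show k - η ≤ k + η by linarith) e2
        omega
      · have hp := abs_pos.2 (sub_ne_zero.2 hk)
        rcases lt_abs.1 (show ε < |k - m| by linarith) with h5 | h5
        · rw [h.one (show m ≤ k + ε by linarith) h3, h.one (show m ≤ k - ε by linarith) h3]
          simp
        · rw [h.zero (show k + ε < m by linarith), h.zero (show k - ε < m by linarith)]
          simp
    omega
  · rintro rfl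
    obtain ⟨ε, hε, h1, h2, h3⟩ := hsmall 1 one_pos
    refine lt_of_lt_of_le zero_lt_one (le_csInf ⟨_, ε, hε, h2, rfl⟩ ?_)
    rintro z ⟨η, e1, e2, rfl⟩
    rw [h.zero (show k - η < k by linarith)]
    have a1 := h.anti e2 (le_max_left (1 / η) B)
    rw [h.one (show k ≤ k + η by linarith) (le_max_right (1 / η) B)] at a1
    push_cast
    omega

end mult

lemma GoodF.unique {f g : ℝ → ℝ → ℕ} {m B B' : ℝ} (hf : GoodF f m B) (hg : GoodF g m B')
    (hloc : ∀ x y, x < y → ∃ ε > 0, ∀ u u' v v', x - ε < u → u < x + ε → x - ε < u' → u' < x + ε →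
      y - ε < v → v < y + ε → y - ε < v' → v' < y + ε →
      ((f u v : ℤ) - g u v) - ((f u' v : ℤ) - g u' v) =
        ((f u v' : ℤ) - g u v') - ((f u' v' : ℤ) - g u' v')) {α β : ℝ} (hab : α < β) :
    f α β = g α β := by
  set h : ℝ → ℝ → ℤ := fun u v => (f u v : ℤ) - g u v with hh
  obtain ⟨C, hC1, hC2, hC3⟩ : ∃ C, β ≤ C ∧ B ≤ C ∧ B' ≤ C :=
    ⟨max β (max B B'), by simp, by simp, by simp⟩
  have hhC : ∀ u, h u C = 0 := by
    intro u
    simp only [hh]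
    by_cases hu : m ≤ u
    · rw [hf.one hu hC2, hg.one hu hC3]; simp
    · push Not at hu
      rw [hf.zero hu, hg.zero hu]; simp
  have step : ∀ x0 < β, ∀ᶠ u in 𝓝 x0, h u β = h x0 β := by
    intro x0 hx0
    have h1 : ∀ᶠ u in 𝓝 x0, ∀ v ∈ Icc β C, ∀ᶠ v' in 𝓝 v, h u v' - h x0 v' = h u v - h x0 v := by
      apply isCompact_Icc.eventually_forall_of_forall_eventually
      intro v hv
      obtain ⟨ε, hε, H⟩ := hloc x0 v (hx0.trans_le hv.1)
      have n1 : Ioo (x0 - ε) (x0 + ε) ∈ 𝓝 x0 := Ioo_mem_nhds (by linarith) (by linarith)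
      have n2 : Ioo (v - ε) (v + ε) ∈ 𝓝 v := Ioo_mem_nhds (by linarith) (by linarith)
      filter_upwards [prod_mem_nhds n1 n2] with z hz
      filter_upwards [isOpen_Ioo.mem_nhds hz.2] with v' hv'
      exact H _ _ _ _ hz.1.1 hz.1.2 (by linarith) (by linarith) hv'.1 hv'.2 hz.2.1 hz.2.2
    filter_upwards [h1] with u hu
    have hc : ContinuousOn (fun v => h u v - h x0 v) (Icc β C) := by
      intro v hv
      apply ContinuousAt.continuousWithinAt
      exact continuousAt_const.congr ((hu v hv).mono fun _ h => h.symm)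
    have := isPreconnected_Icc.constant hc (left_mem_Icc.2 hC1) (right_mem_Icc.2 hC1)
    simp only [hhC] at this
    linarith
  have hc : ContinuousOn (fun u => h u β) (Iio β) := by
    intro u hu
    apply ContinuousAt.continuousWithinAt
    exact continuousAt_const.congr ((step u hu).mono fun _ h => h.symm)
  have hmin1 := min_le_left α (m - 1)
  have hmin2 := min_le_right α (m - 1)
  have := isPreconnected_Iio.constant hc (show α ∈ Iio β from hab)
    (show min α (m - 1) ∈ Iio β from lt_of_le_of_lt hmin1 hab)
  simp only [hh] at this
  rw [hf.zero (show min α (m - 1) < m by linarith), hg.zero (show min α (m - 1) < m by linarith)] at this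
  simp only [Nat.cast_zero, sub_zero] at this
  omega

lemma rsf_eq_of_mult_eq {M N : Type*} [TopologicalSpace M] [TopologicalSpace N] {φ : M → ℝ}
    {ψ : N → ℝ} {m B B' : ℝ} (hf : GoodF (rsf φ) m B) (hg : GoodF (rsf ψ) m B')
    (H : ∀ x y, x < y → mult φ (x, y) = mult ψ (x, y)) {x y : ℝ} (hxy : x < y) :
    rsf φ x y = rsf ψ x y := by
  refine hf.unique hg ?_ hxy
  intro x y hxy
  obtain ⟨ε, hε, hε1, hε2, hε3, -⟩ := mult_local hf hxy
  obtain ⟨η, hη, hη1, hη2, hη3, -⟩ := mult_local hg hxy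
  obtain ⟨δ, hδ, hδ'⟩ := exists_between (show 0 < min ε η from lt_min hε hη)
  rw [lt_min_iff] at hδ'
  refine ⟨δ, hδ, ?_⟩
  intro u u' v v' hu1 hu2 hu1' hu2' hv1 hv2 hv1' hv2'
  have hD : D2 (rsf φ) x y (δ / 2) = D2 (rsf ψ) x y (δ / 2) := by
    rw [← hε2 _ (by linarith) (by linarith), ← hη2 _ (by linarith) (by linarith), H x y hxy]
  unfold D2 at hD
  have hr : ∀ u, x - δ < u → u < x + δ → (∃ r, (r = x - δ / 2 ∨ r = x + δ / 2) ∧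
      (x ≤ u ↔ x ≤ r)) := by
    intro u h1 h2
    by_cases hx : x ≤ u
    · exact ⟨_, Or.inr rfl, by constructor <;> intro <;> linarith⟩
    · exact ⟨_, Or.inl rfl, by constructor <;> intro <;> linarith⟩
  have hs : ∀ v, y - δ < v → v < y + δ → (∃ r, (r = y - δ / 2 ∨ r = y + δ / 2) ∧
      (y ≤ v ↔ y ≤ r)) := by
    intro u h1 h2
    by_cases hx : y ≤ u
    · exact ⟨_, Or.inr rfl, by constructor <;> intro <;> linarith⟩
    · exact ⟨_, Or.inl rfl, by constructor <;> intro <;> linarith⟩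
  have hb : ∀ {r z : ℝ}, (r = z - δ / 2 ∨ r = z + δ / 2) → z - δ < r ∧ r < z + δ := by
    rintro r z (rfl | rfl) <;> constructor <;> linarith
  have key : ∀ u v r s, x - δ < u → u < x + δ → y - δ < v → v < y + δ →
      (r = x - δ / 2 ∨ r = x + δ / 2) → (s = y - δ / 2 ∨ s = y + δ / 2) →
      (x ≤ u ↔ x ≤ r) → (y ≤ v ↔ y ≤ s) →
      rsf φ u v = rsf φ r s ∧ rsf ψ u v = rsf ψ r s := by
    intro u v r s h1 h2 h3 h4 h5 h6 h7 h8
    have a := hb h5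
    have b := hb h6
    constructor
    · exact hε3 _ _ _ _ (by linarith) (by linarith) (by linarith) (by linarith) (by linarith)
        (by linarith) (by linarith) (by linarith) h7 h8
    · exact hη3 _ _ _ _ (by linarith) (by linarith) (by linarith) (by linarith) (by linarith)
        (by linarith) (by linarith) (by linarith) h7 h8
  obtain ⟨r, r1, r2⟩ := hr u hu1 hu2
  obtain ⟨r', r1', r2'⟩ := hr u' hu1' hu2'
  obtain ⟨s, s1, s2⟩ := hs v hv1 hv2
  obtain ⟨s', s1', s2'⟩ := hs v' hv1' hv2'
  have k1 := key u v r s hu1 hu2 hv1 hv2 r1 s1 r2 s2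
  have k2 := key u' v r' s hu1' hu2' hv1 hv2 r1' s1 r2' s2
  have k3 := key u v' r s' hu1 hu2 hv1' hv2' r1 s1' r2 s2'
  have k4 := key u' v' r' s' hu1' hu2' hv1' hv2' r1' s1' r2' s2'
  rw [k1.1, k1.2, k2.1, k2.2, k3.1, k3.2, k4.1, k4.2]
  rcases r1 with rfl | rfl <;> rcases r1' with rfl | rfl <;> rcases s1 with rfl | rfl <;>
    rcases s1' with rfl | rfl <;> omega

lemma eDist_coe (x y x' y' : ℝ) : eDist (x, (y : EReal)) (x', (y' : EReal)) =
    ENNReal.ofReal (min (max |x - x'| |y - y'|) (max ((y - x) / 2) ((y' - x') / 2))) := by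
  simp [eDist]

lemma eDist_top (x x' : ℝ) : eDist (x, ⊤) (x', ⊤) = ENNReal.ofReal |x - x'| := by
  simp [eDist]

lemma eDist_top_coe (x x' y : ℝ) : eDist (x, ⊤) (x', (y : EReal)) = ⊤ := by
  simp [eDist]

lemma eDist_coe_top (x x' y : ℝ) : eDist (x', (y : EReal)) (x, ⊤) = ⊤ := by
  simp [eDist]

def Valid (p : ℝ × EReal) : Prop :=
  (∃ x : ℝ, p = (x, ⊤)) ∨ ∃ x y : ℝ, p = (x, (y : EReal)) ∧ x ≤ y

lemma eDist_comm' (p q : ℝ × EReal) : eDist p q = eDist q p := by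
  unfold eDist
  rw [abs_sub_comm p.1 q.1, abs_sub_comm p.2.toReal, max_comm ((p.2.toReal - p.1) / 2)]
  simp only [and_comm, or_comm]

lemma eDist_triangle' {p q r : ℝ × EReal} (hp : Valid p) (hq : Valid q) (hr : Valid r) :
    eDist p r ≤ eDist p q + eDist q r := by
  rcases hp with ⟨x, rfl⟩ | ⟨x, y, rfl, hxy⟩ <;> rcases hq with ⟨x', rfl⟩ | ⟨x', y', rfl, hxy'⟩ <;>
    rcases hr with ⟨x'', rfl⟩ | ⟨x'', y'', rfl, hxy''⟩ <;>
    simp only [eDist_coe, eDist_top, eDist_top_coe, eDist_coe_top, top_add, add_top, le_top]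
  · exact (ENNReal.ofReal_le_ofReal (abs_sub_le x x' x'')).trans ENNReal.ofReal_add_le
  · refine (ENNReal.ofReal_le_ofReal ?_).trans ENNReal.ofReal_add_le
    have t1 := abs_sub_le x x' x''
    have t2 := abs_sub_le y y' y''
    have t3 := abs_le.1 (le_refl |x - x'|)
    have t4 := abs_le.1 (le_refl |y - y'|)
    have t5 := abs_le.1 (le_refl |x' - x''|)
    have t6 := abs_le.1 (le_refl |y' - y''|)
    generalize |x - x''| = A at *
    generalize |x - x'| = A1 at *
    generalize |x' - x''| = A2 at *
    generalize |y - y''| = C at *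
    generalize |y - y'| = C1 at *
    generalize |y' - y''| = C2 at *
    have a1 := le_max_left A1 C1
    have a2 := le_max_right A1 C1
    have b1 := le_max_left A2 C2
    have b2 := le_max_right A2 C2
    have c1 := le_max_left ((y - x) / 2) ((y' - x') / 2)
    have c2 := le_max_right ((y - x) / 2) ((y' - x') / 2)
    have d1 := le_max_left ((y' - x') / 2) ((y'' - x'') / 2)
    have d2 := le_max_right ((y' - x') / 2) ((y'' - x'') / 2)
    rcases min_choice (max A1 C1) (max ((y - x) / 2) ((y' - x') / 2)) with e1 | e1 <;>
    rcases min_choice (max A2 C2) (max ((y' - x') / 2) ((y'' - x'') / 2)) with e2 | e2 <;>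
    rw [e1, e2]
    · exact (min_le_left _ _).trans (max_le (by linarith) (by linarith))
    · exact (min_le_right _ _).trans (max_le (by linarith) (by linarith))
    · exact (min_le_right _ _).trans (max_le (by linarith) (by linarith))
    · exact (min_le_right _ _).trans (max_le (by linarith) (by linarith))

lemma dMatchSeq_comm (a b : ℕ → ℝ × EReal) : dMatchSeq a b = dMatchSeq b a := by
  have key : ∀ a b : ℕ → ℝ × EReal, dMatchSeq a b ≤ dMatchSeq b a := by
    intro a b
    refine le_iInf fun σ => ?_
    let e := Equiv.ofBijective σ.1 σ.2
    refine (iInf_le _ ⟨e.symm, e.symm.bijective⟩).trans (iSup_le fun i => ?_)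
    have : σ.1 (e.symm i) = i := e.apply_symm_apply i
    refine le_trans (le_of_eq ?_) (le_iSup _ (e.symm i))
    simp only [this]
    exact eDist_comm' _ _
  exact le_antisymm (key a b) (key b a)

lemma dMatchSeq_triangle {a b c : ℕ → ℝ × EReal} (ha : ∀ i, Valid (a i)) (hb : ∀ i, Valid (b i))
    (hc : ∀ i, Valid (c i)) : dMatchSeq a c ≤ dMatchSeq a b + dMatchSeq b c := by
  unfold dMatchSeq
  rw [ENNReal.iInf_add]
  refine le_iInf fun σ => ?_
  rw [ENNReal.add_iInf]
  refine le_iInf fun τ => ?_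
  refine (iInf_le _ ⟨τ.1 ∘ σ.1, τ.2.comp σ.2⟩).trans (iSup_le fun i => ?_)
  refine (eDist_triangle' (ha i) (hb (σ.1 i)) (hc _)).trans (add_le_add ?_ ?_)
  · exact le_iSup (fun i => eDist (a i) (b (σ.1 i))) i
  · exact le_iSup (fun i => eDist (b i) (c (τ.1 i))) (σ.1 i)

lemma eDist_self' {p : ℝ × EReal} (hp : Valid p) : eDist p p = 0 := by
  rcases hp with ⟨x, rfl⟩ | ⟨x, y, rfl, hxy⟩
  · simp [eDist_top]
  · simp [eDist_coe]

lemma IsRepSeq.valid {M : Type*} [TopologicalSpace M] {φ : M → ℝ} {a : ℕ → ℝ × EReal}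
    (h : IsRepSeq φ a) (i : ℕ) : Valid (a i) := by
  obtain ⟨⟨k, hk, -⟩, h2, -, -⟩ := h
  rcases Nat.eq_zero_or_pos i with rfl | hi
  · exact Or.inl ⟨k, hk⟩
  · rcases h2 i hi with ⟨x, y, h, hxy, -⟩ | ⟨x, h⟩
    · exact Or.inr ⟨x, y, h, hxy.le⟩
    · exact Or.inr ⟨x, x, h, le_rfl⟩

open scoped Classical in
/-- collapse the diagonal -/
noncomputable def collapse (p : ℝ × EReal) : Option (ℝ × EReal) :=
  if ∃ x : ℝ, p = (x, (x : EReal)) then none else some p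

lemma collapse_none {p : ℝ × EReal} : collapse p = none ↔ ∃ x : ℝ, p = (x, (x : EReal)) := by
  unfold collapse
  split_ifs with h <;> simp [h]

lemma collapse_some {p q : ℝ × EReal} : collapse p = some q ↔
    p = q ∧ ¬ ∃ x : ℝ, p = (x, (x : EReal)) := by
  unfold collapse
  split_ifs with h
  · simp [h]
  · simp only [Option.some.injEq, h, not_false_eq_true, and_true]

lemma eDist_of_collapse {p q : ℝ × EReal} (hp : Valid p) (h : collapse p = collapse q) :
    eDist p q = 0 := by
  rcases hc : collapse p with _ | r
  · obtain ⟨x, rfl⟩ := collapse_none.1 hc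
    obtain ⟨y, rfl⟩ := collapse_none.1 (h.symm.trans hc)
    rw [eDist_coe]
    simp
  · obtain ⟨rfl, -⟩ := collapse_some.1 hc
    obtain ⟨rfl, -⟩ := collapse_some.1 (h.symm.trans hc)
    exact eDist_self' hp

lemma nonempty_equiv_of_nat {s t : Set ℕ} (h : (s.Infinite ∧ t.Infinite) ∨
    (s.Finite ∧ t.Finite ∧ s.ncard = t.ncard)) : Nonempty (s ≃ t) := by
  rcases h with ⟨hs, ht⟩ | ⟨hs, ht, h⟩
  · have := hs.to_subtype
    have := ht.to_subtype
    exact nonempty_equiv_of_countable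
  · have := hs.to_subtype
    have := ht.to_subtype
    exact Finite.card_eq.1 h

lemma bij_of_fibers {α : Type*} (f g : ℕ → α)
    (h : ∀ v, Nonempty ({i | f i = v} ≃ {i | g i = v})) :
    ∃ σ : ℕ ≃ ℕ, ∀ i, f i = g (σ i) := by
  let e : ∀ v, {i | f i = v} ≃ {i | g i = v} := fun v => (h v).some
  let σ : ℕ ≃ ℕ := (Equiv.sigmaFiberEquiv f).symm.trans
    ((Equiv.sigmaCongrRight (fun v => e v)).trans (Equiv.sigmaFiberEquiv g))
  refine ⟨σ, fun i => ?_⟩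
  have : g (σ i) = f i := (e (f i) ⟨i, rfl⟩).2
  exact this.symm

section reps
variable {M : Type*} [TopologicalSpace M] {φ : M → ℝ} {m B : ℝ} {a a' : ℕ → ℝ × EReal}

lemma IsRepSeq.zero_eq (h : GoodF (rsf φ) m B) (ha : IsRepSeq φ a) : a 0 = (m, ⊤) := by
  obtain ⟨k, hk, hk'⟩ := ha.1
  rw [hk, (multInf_pos_iff h k).1 hk']

lemma IsRepSeq.top_iff (h : GoodF (rsf φ) m B) (ha : IsRepSeq φ a) (i : ℕ) :
    (a i).2 = ⊤ ↔ i = 0 := by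
  constructor
  · intro h2
    by_contra hi
    rcases ha.2.1 i (Nat.pos_of_ne_zero hi) with ⟨x, y, e, -⟩ | ⟨x, e⟩ <;> simp [e] at h2
  · rintro rfl
    rw [ha.zero_eq h]

lemma rep_fiber (h : GoodF (rsf φ) m B) (ha : IsRepSeq φ a) (ha' : IsRepSeq φ a')
    (v : Option (ℝ × EReal)) :
    Nonempty ({i | collapse (a i) = v} ≃ {i | collapse (a' i) = v}) := by
  apply nonempty_equiv_of_nat
  rcases v with _ | ⟨x, z⟩
  · left
    simp only [collapse_none]
    exact ⟨ha.2.2.2, ha'.2.2.2⟩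
  · right
    by_cases hz : z = ⊤
    · subst hz
      have key : ∀ {b : ℕ → ℝ × EReal}, IsRepSeq φ b →
          {i | collapse (b i) = some (x, ⊤)} = {i | i = 0 ∧ x = m} := by
        intro b hb
        ext i
        simp only [collapse_some, mem_ofPred_eq]
        constructor
        · rintro ⟨e, -⟩
          have : i = 0 := (hb.top_iff h i).1 (by rw [e])
          subst this
          rw [hb.zero_eq h] at e
          exact ⟨rfl, by simpa using e.symm⟩
        · rintro ⟨rfl, rfl⟩
          rw [hb.zero_eq h]
          simp
      rw [key ha, key ha']
      have : {i : ℕ | i = 0 ∧ x = m}.Finite := (finite_singleton 0).subset (fun i hi => hi.1)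
      exact ⟨this, this, rfl⟩
    · by_cases hc : ∃ y : ℝ, z = (y : EReal) ∧ x < y ∧ 0 < mult φ (x, y)
      · obtain ⟨y, rfl, hxy, hpos⟩ := hc
        have key : ∀ {b : ℕ → ℝ × EReal}, IsRepSeq φ b →
            {i | collapse (b i) = some (x, (y : EReal))} = {i | b i = (x, (y : EReal))} := by
          intro b hb
          ext i
          simp only [collapse_some, mem_ofPred_eq]
          refine ⟨fun h => h.1, fun h => ⟨h, ?_⟩⟩
          rintro ⟨w, hw⟩
          rw [h] at hw
          simp only [Prod.mk.injEq, EReal.coe_eq_coe_iff] at hw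
          linarith [hw.1, hw.2]
        have k2 : ∀ {b : ℕ → ℝ × EReal}, IsRepSeq φ b →
            {i | b i = (x, (y : EReal))}.Finite := by
          intro b hb
          apply finite_of_ncard_pos
          rw [hb.2.2.1 x y hxy hpos]
          omega
        rw [key ha, key ha']
        exact ⟨k2 ha, k2 ha', by rw [ha.2.2.1 x y hxy hpos, ha'.2.2.1 x y hxy hpos]⟩
      · have key : ∀ {b : ℕ → ℝ × EReal}, IsRepSeq φ b →
            {i | collapse (b i) = some (x, z)} = ∅ := by
          intro b hb
          ext i
          simp only [collapse_some, mem_ofPred_eq, mem_empty_iff_false, iff_false]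
          rintro ⟨e, hnd⟩
          rcases Nat.eq_zero_or_pos i with rfl | hi
          · apply hz
            have := (hb.top_iff h 0).2 rfl
            rw [e] at this
            exact this
          · rcases hb.2.1 i hi with ⟨x', y, e', hxy, hpos⟩ | hd
            · rw [e'] at e
              simp only [Prod.mk.injEq] at e
              obtain ⟨rfl, rfl⟩ := e
              exact hc ⟨y, rfl, hxy, hpos⟩
            · exact hnd hd
        rw [key ha, key ha']
        exact ⟨finite_empty, finite_empty, rfl⟩

lemma dMatchSeq_rep (h : GoodF (rsf φ) m B) (ha : IsRepSeq φ a) (ha' : IsRepSeq φ a') :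
    dMatchSeq a a' = 0 := by
  obtain ⟨σ, hσ⟩ := bij_of_fibers _ _ (rep_fiber h ha ha')
  refine le_antisymm ((iInf_le _ ⟨σ, σ.bijective⟩).trans (iSup_le fun i => ?_)) zero_le
  exact (eDist_of_collapse (ha.valid i) (hσ i)).le

lemma corner_countable (h : GoodF (rsf φ) m B) :
    {p : ℝ × ℝ | p.1 < p.2 ∧ 0 < mult φ p}.Countable := by
  set S := {p : ℝ × ℝ | p.1 < p.2 ∧ 0 < mult φ p} with hS
  have hd : DiscreteTopology S := by
    rw [discreteTopology_subtype_iff']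
    rintro ⟨x, y⟩ ⟨hxy, hpos⟩
    obtain ⟨ε, hε, -, -, -, H⟩ := mult_local h hxy
    refine ⟨Ioo (x - ε) (x + ε) ×ˢ Ioo (y - ε) (y + ε), isOpen_Ioo.prod isOpen_Ioo, ?_⟩
    ext ⟨u, v⟩
    constructor
    · rintro ⟨⟨h1, h2⟩, h3⟩
      obtain ⟨rfl, rfl⟩ := H u v h1.1 h1.2 h2.1 h2.2 h3.2
      rfl
    · rintro h0
      simp only [mem_singleton_iff, Prod.mk.injEq] at h0
      obtain ⟨rfl, rfl⟩ := h0
      simp only at hxy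
      refine ⟨⟨⟨?_, ?_⟩, ⟨?_, ?_⟩⟩, ⟨hxy, hpos⟩⟩ <;> simp only <;> linarith
  exact countable_coe_iff.1 (countable_of_Lindelof_of_discrete (X := S))

lemma exists_rep (h : GoodF (rsf φ) m B) : ∃ a, IsRepSeq φ a := by
  set S := {p : ℝ × ℝ | p.1 < p.2 ∧ 0 < mult φ p} with hS
  have : Countable S := countable_coe_iff.2 (corner_countable h)
  let T := (Σ p : S, Fin (mult φ p.1).toNat) ⊕ ℕ
  have hT : Nonempty (ℕ ≃ T) := nonempty_equiv_of_countable
  obtain ⟨e⟩ := hT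
  let b : T → ℝ × EReal := Sum.elim (fun q => (q.1.1.1, (q.1.1.2 : EReal))) (fun _ => (0, ((0 : ℝ) : EReal)))
  let a : ℕ → ℝ × EReal := fun n => Nat.casesOn n (m, ⊤) (fun k => b (e k))
  have ha0 : a 0 = (m, ⊤) := rfl
  have has : ∀ k, a (k + 1) = b (e k) := fun k => rfl
  refine ⟨a, ⟨m, ha0, (multInf_pos_iff h m).2 rfl⟩, ?_, ?_, ?_⟩
  · intro i hi
    obtain ⟨k, rfl⟩ := Nat.exists_eq_succ_of_ne_zero hi.ne'
    rw [Nat.succ_eq_add_one, has]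
    rcases e k with ⟨⟨⟨x, y⟩, hp⟩, j⟩ | j
    · exact Or.inl ⟨x, y, rfl, hp.1, hp.2⟩
    · exact Or.inr ⟨0, rfl⟩
  · intro x y hxy hpos
    let p : S := ⟨(x, y), hxy, hpos⟩
    have : {i : ℕ | a i = (x, (y : EReal))} =
        range (fun j : Fin (mult φ (x, y)).toNat => e.symm (Sum.inl ⟨p, j⟩) + 1) := by
      ext i
      simp only [mem_ofPred_eq, mem_range]
      constructor
      · intro hi
        rcases i with _ | k
        · rw [ha0] at hi
          simp at hi
        · rw [has] at hi
          rcases hk : e k with ⟨⟨⟨x', y'⟩, hp⟩, j⟩ | j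
          · rw [hk] at hi
            simp only [b, Sum.elim_inl, Prod.mk.injEq, EReal.coe_eq_coe_iff] at hi
            obtain ⟨rfl, rfl⟩ := hi
            exact ⟨j, by rw [← hk]; simp⟩
          · rw [hk] at hi
            simp only [b, Sum.elim_inr, Prod.mk.injEq, EReal.coe_eq_coe_iff] at hi
            linarith [hi.1, hi.2]
      · rintro ⟨j, rfl⟩
        rw [has, Equiv.apply_symm_apply]
        rfl
    rw [this, ← image_univ, ncard_image_of_injective, ncard_univ, Nat.card_eq_fintype_card,
      Fintype.card_fin]
    intro j j' hj
    have h3 := e.symm.injective (Nat.succ_injective hj)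
    simpa using Sum.inl_injective h3
  · refine (infinite_range_of_injective (f := fun j : ℕ => e.symm (Sum.inr j) + 1) ?_).mono ?_
    · intro j j' hj
      have h3 := e.symm.injective (Nat.succ_injective hj)
      exact Sum.inr_injective h3
    · rintro _ ⟨j, rfl⟩
      refine ⟨0, ?_⟩
      rw [has, Equiv.apply_symm_apply]
      rfl

lemma rep_bound (h : GoodF (rsf φ) m B) (ha : IsRepSeq φ a) {i : ℕ} (hi : 0 < i) :
    ∃ x y : ℝ, a i = (x, (y : EReal)) ∧ y - x ≤ max (B - m) 0 := by
  rcases ha.2.1 i hi with ⟨x, y, e, hxy, hpos⟩ | ⟨x, e⟩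
  · have := mult_bound h hxy hpos
    exact ⟨x, y, e, le_max_of_le_left (by linarith)⟩
  · exact ⟨x, x, e, le_max_of_le_right (by linarith)⟩

end reps

section two
variable {M N : Type*} [TopologicalSpace M] [TopologicalSpace N] {φ : M → ℝ} {ψ : N → ℝ}
  {m B m' B' : ℝ} {a b : ℕ → ℝ × EReal}

lemma dMatchSeq_indep {a' b' : ℕ → ℝ × EReal} (h : GoodF (rsf φ) m B) (h' : GoodF (rsf ψ) m' B')
    (ha : IsRepSeq φ a) (ha' : IsRepSeq φ a') (hb : IsRepSeq ψ b) (hb' : IsRepSeq ψ b') :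
    dMatchSeq a b = dMatchSeq a' b' := by
  have key : ∀ {a a' b b' : ℕ → ℝ × EReal}, IsRepSeq φ a → IsRepSeq φ a' → IsRepSeq ψ b →
      IsRepSeq ψ b' → dMatchSeq a b ≤ dMatchSeq a' b' := by
    intro a a' b b' ha ha' hb hb'
    have t1 := dMatchSeq_triangle ha.valid ha'.valid hb.valid
    have t2 := dMatchSeq_triangle ha'.valid hb'.valid hb.valid
    rw [dMatchSeq_rep h ha ha', zero_add] at t1
    rw [dMatchSeq_rep h' hb' hb, add_zero] at t2
    exact t1.trans t2
  exact le_antisymm (key ha ha' hb hb') (key ha' ha hb' hb)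

lemma dMatch_eq (h : GoodF (rsf φ) m B) (h' : GoodF (rsf ψ) m' B')
    (ha : IsRepSeq φ a) (hb : IsRepSeq ψ b) : dMatch φ ψ = dMatchSeq a b := by
  unfold dMatch
  apply le_antisymm
  · exact sInf_le ⟨a, b, ha, hb, rfl⟩
  · refine le_sInf ?_
    rintro s ⟨a', b', ha', hb', rfl⟩
    exact (dMatchSeq_indep h h' ha ha' hb hb').le

lemma dMatchSeq_ne_top (h : GoodF (rsf φ) m B) (h' : GoodF (rsf ψ) m' B')
    (ha : IsRepSeq φ a) (hb : IsRepSeq ψ b) : dMatchSeq a b ≠ ⊤ := by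
  refine ne_top_of_le_ne_top
    (ENNReal.ofReal_ne_top (r := max |m - m'| (max (max (B - m) 0) (max (B' - m') 0) / 2)))
    ((iInf_le _ ⟨id, Function.bijective_id⟩).trans (iSup_le fun i => ?_))
  rcases Nat.eq_zero_or_pos i with rfl | hi
  · simp only [id, ha.zero_eq h, hb.zero_eq h', eDist_top]
    exact ENNReal.ofReal_le_ofReal (le_max_left _ _)
  · obtain ⟨x, y, e, hle⟩ := rep_bound h ha hi
    obtain ⟨x', y', e', hle'⟩ := rep_bound h' hb hi
    simp only [id, e, e', eDist_coe]
    apply ENNReal.ofReal_le_ofReal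
    refine (min_le_right _ _).trans (le_max_of_le_right (max_le ?_ ?_))
    · have := le_max_left (max (B - m) 0) (max (B' - m') 0)
      linarith
    · have := le_max_right (max (B - m) 0) (max (B' - m') 0)
      linarith

lemma exists_match (h0 : dMatchSeq a b = 0) {δ : ℝ} (hδ : 0 < δ) :
    ∃ σ : ℕ → ℕ, Function.Bijective σ ∧ ∀ i, eDist (a i) (b (σ i)) < ENNReal.ofReal δ := by
  have : dMatchSeq a b < ENNReal.ofReal δ := by rw [h0]; simpa using hδ
  unfold dMatchSeq at this
  obtain ⟨σ, hσ⟩ := iInf_lt_iff.1 this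
  exact ⟨σ.1, σ.2, fun i => (le_iSup (fun i => eDist (a i) (b (σ.1 i))) i).trans_lt hσ⟩

lemma min_eq_of_zero (h : GoodF (rsf φ) m B) (h' : GoodF (rsf ψ) m' B')
    (ha : IsRepSeq φ a) (hb : IsRepSeq ψ b) (h0 : dMatchSeq a b = 0) : m = m' := by
  by_contra hne
  have hpos : 0 < |m - m'| := abs_pos.2 (sub_ne_zero.2 hne)
  obtain ⟨σ, -, hσ⟩ := exists_match h0 hpos
  have h1 := hσ 0
  rw [ha.zero_eq h] at h1
  rcases Nat.eq_zero_or_pos (σ 0) with hs | hs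
  · rw [hs, hb.zero_eq h', eDist_top] at h1
    exact lt_irrefl _ h1
  · obtain ⟨x, y, e, -⟩ := rep_bound h' hb hs
    rw [e, eDist_top_coe] at h1
    exact not_top_lt h1

lemma mult_le_of_zero (h : GoodF (rsf φ) m B) (h' : GoodF (rsf ψ) m' B')
    (ha : IsRepSeq φ a) (hb : IsRepSeq ψ b) (h0 : dMatchSeq a b = 0) {x y : ℝ} (hxy : x < y) :
    mult φ (x, y) ≤ mult ψ (x, y) := by
  by_cases hpos : 0 < mult φ (x, y)
  swap
  · exact (not_lt.1 hpos).trans (mult_nonneg h' hxy)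
  obtain ⟨ε, hε, -, -, -, H⟩ := mult_local h' hxy
  obtain ⟨σ, hσb, hσ⟩ := exists_match h0 (show 0 < min ε ((y - x) / 2) from
    lt_min hε (by linarith))
  have hmap : ∀ i, a i = (x, (y : EReal)) →
      b (σ i) = (x, (y : EReal)) ∧ 0 < mult ψ (x, y) := by
    intro i hi
    have h1 := hσ i
    rw [hi] at h1
    have hs : 0 < σ i := by
      rcases Nat.eq_zero_or_pos (σ i) with hs | hs
      · rw [hs, hb.zero_eq h', eDist_coe_top] at h1
        exact absurd h1 not_top_lt
      · exact hs
    have bnd : ∀ x' y' : ℝ, b (σ i) = (x', (y' : EReal)) →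
        |x - x'| < min ε ((y - x) / 2) ∧ |y - y'| < min ε ((y - x) / 2) := by
      intro x' y' e
      rw [e, eDist_coe, ENNReal.ofReal_lt_ofReal_iff (lt_min hε (by linarith)), min_lt_iff] at h1
      rcases h1 with h1 | h1
      · exact max_lt_iff.1 h1
      · have := (max_lt_iff.1 h1).1
        have := this.trans_le (min_le_right _ _)
        exact absurd this (lt_irrefl _)
    rcases hb.2.1 _ hs with ⟨x', y', e, hxy', hpos'⟩ | ⟨x', e⟩
    · obtain ⟨b1, b2⟩ := bnd x' y' e
      have c1 := abs_lt.1 (b1.trans_le (min_le_left _ _))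
      have c2 := abs_lt.1 (b2.trans_le (min_le_left _ _))
      obtain ⟨rfl, rfl⟩ := H x' y' (by linarith) (by linarith) (by linarith) (by linarith) hpos'
      exact ⟨e, hpos'⟩
    · obtain ⟨b1, b2⟩ := bnd x' x' e
      have c1 := abs_lt.1 (b1.trans_le (min_le_right _ _))
      have c2 := abs_lt.1 (b2.trans_le (min_le_right _ _))
      linarith
  have n1 := ha.2.2.1 x y hxy hpos
  have hne : {i | a i = (x, (y : EReal))}.Nonempty := by
    apply nonempty_of_ncard_ne_zero
    omega
  obtain ⟨i, hi⟩ := hne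
  have hpos' := (hmap i hi).2
  have n2 := hb.2.2.1 x y hxy hpos'
  have := Set.ncard_le_ncard_of_injOn (s := {i | a i = (x, (y : EReal))})
    (t := {i | b i = (x, (y : EReal))}) σ (fun i hi => (hmap i hi).1) hσb.1.injOn
    (finite_of_ncard_pos (by omega))
  omega

lemma rep_congr (H : ∀ x y : ℝ, x < y → rsf φ x y = rsf ψ x y) (ha : IsRepSeq φ a) :
    IsRepSeq ψ a := by
  have hm : ∀ x y : ℝ, mult φ (x, y) = mult ψ (x, y) := by
    intro x y
    rw [mult_def, mult_def]
    congr 1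
    ext z
    refine exists_congr fun ε => and_congr_right fun h1 => and_congr_right fun h2 => ?_
    unfold D2
    rw [H _ _ (show x + ε < y - ε by linarith), H _ _ (show x - ε < y - ε by linarith),
      H _ _ (show x + ε < y + ε by linarith), H _ _ (show x - ε < y + ε by linarith)]
  have hi : ∀ k, multInf φ k = multInf ψ k := by
    intro k
    unfold multInf
    congr 1
    ext z
    refine exists_congr fun ε => and_congr_right fun h1 => and_congr_right fun h2 => ?_
    rw [H _ _ h2, H _ _ (show k - ε < 1 / ε by linarith)]
  unfold IsRepSeq at ha ⊢
  simpa only [hm, hi] using ha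

end two

theorem matching_distance_well_defined_and_metric
    {M N P : Type*} [TopologicalSpace M] [CompactSpace M] [ConnectedSpace M] [LocallyConnectedSpace M] [T2Space M] [TopologicalSpace N] [CompactSpace N] [ConnectedSpace N] [LocallyConnectedSpace N] [T2Space N] [TopologicalSpace P] [CompactSpace P] [ConnectedSpace P] [LocallyConnectedSpace P] [T2Space P]
    {φ : M → ℝ} {ψ : N → ℝ} {χ : P → ℝ}
    (hφ : Continuous φ) (hψ : Continuous ψ) (hχ : Continuous χ) :
    (∀ a a' b b' : ℕ → ℝ × EReal, IsRepSeq φ a → IsRepSeq φ a' →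
      IsRepSeq ψ b → IsRepSeq ψ b' → dMatchSeq a b = dMatchSeq a' b') ∧
    dMatch φ ψ ≠ ⊤ ∧
    dMatch φ ψ = dMatch ψ φ ∧
    dMatch φ χ ≤ dMatch φ ψ + dMatch ψ χ ∧
    (dMatch φ ψ = 0 ↔ ∀ x y : ℝ, x < y → rsf φ x y = rsf ψ x y) := by
  obtain ⟨m, B, h⟩ := rsf_good hφ
  obtain ⟨m', B', h'⟩ := rsf_good hψ
  obtain ⟨m'', B'', h''⟩ := rsf_good hχ
  obtain ⟨a, ha⟩ := exists_rep h
  obtain ⟨b, hb⟩ := exists_rep h'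
  obtain ⟨c, hc⟩ := exists_rep h''
  rw [dMatch_eq h h' ha hb, dMatch_eq h' h hb ha, dMatch_eq h h'' ha hc, dMatch_eq h' h'' hb hc]
  refine ⟨fun a a' b b' ha ha' hb hb' => dMatchSeq_indep h h' ha ha' hb hb',
    dMatchSeq_ne_top h h' ha hb, dMatchSeq_comm a b,
    dMatchSeq_triangle ha.valid hb.valid hc.valid, ?_, ?_⟩
  · intro h0 x y hxy
    obtain rfl := min_eq_of_zero h h' ha hb h0
    refine rsf_eq_of_mult_eq h h' (fun x y hxy => ?_) hxy
    exact le_antisymm (mult_le_of_zero h h' ha hb h0 hxy)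
      (mult_le_of_zero h' h hb ha (by rw [dMatchSeq_comm]; exact h0) hxy)
  · intro H
    exact dMatchSeq_rep h' (rep_congr H ha) hb
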